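/- Let b be a connected, canonically compactifiable graph over a finite discrete measure space (X,m), and let h ∈ ℓ²(X,m) with h not identically zero. Then there exists u ∈ D(L) with Lu = h e^u (i.e. Lu(x) = h(x)e^{u(x)} for all x ∈ X) if and only if h̄ < 0 and h changes sign (i.e. h takes both a positive and a negative value). -/

import Mathlib

open scoped BigOperators

/-- `u` is square-summable with respect to the measure `m`, i.e. `u ∈ ℓ²(X,m)`. -/
def MemL2 {X : Type*} (m : X → ℝ) (u : X → ℝ) : Prop :=
  Summable (fun x => u x ^ 2 * m x)

/-- `u` has finite energy: the sum defining `Q̃(u)` converges. -/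
def FinEnergy {X : Type*} (b : X → X → ℝ) (u : X → ℝ) : Prop :=
  Summable (fun p : X × X => b p.1 p.2 * (u p.1 - u p.2) ^ 2)

/-- The energy `Q(u) = (1/2) Σ_{x,y} b(x,y) (u(x) - u(y))²`. -/
noncomputable def energy {X : Type*} (b : X → X → ℝ) (u : X → ℝ) : ℝ :=
  (1 / 2) * ∑' p : X × X, b p.1 p.2 * (u p.1 - u p.2) ^ 2

/-- The bilinear energy form `Q(u,v) = (1/2) Σ_{x,y} b(x,y)(u(x)-u(y))(v(x)-v(y))`. -/
noncomputable def energyBil {X : Type*} (b : X → X → ℝ) (u v : X → ℝ) : ℝ :=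
  (1 / 2) * ∑' p : X × X, b p.1 p.2 * (u p.1 - u p.2) * (v p.1 - v p.2)

/-- The form domain `D(Q) = ℓ²(X,m) ∩ D̃`. -/
def MemDQ {X : Type*} (b : X → X → ℝ) (m : X → ℝ) (u : X → ℝ) : Prop :=
  MemL2 m u ∧ FinEnergy b u

/-- The form norm `‖u‖_Q = (Q(u) + ‖u‖₂²)^{1/2}`. -/
noncomputable def formNorm {X : Type*} (b : X → X → ℝ) (m : X → ℝ) (u : X → ℝ) : ℝ :=
  Real.sqrt (energy b u + ∑' x, u x ^ 2 * m x)

/-- `b` is a graph over `X`: symmetric, nonnegative, zero on the diagonal,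
with summable rows. -/
structure IsGraph {X : Type*} (b : X → X → ℝ) : Prop where
  symm : ∀ x y, b x y = b y x
  nonneg : ∀ x y, 0 ≤ b x y
  diag : ∀ x, b x x = 0
  row_summable : ∀ x, Summable (fun y => b x y)

/-- The graph `b` is connected: any two points are joined by a path of edges of
positive weight. -/
def GraphConnected {X : Type*} (b : X → X → ℝ) : Prop :=
  ∀ x y : X, Relation.ReflTransGen (fun a c => 0 < b a c) x y

/-- `(X,m)` is a finite discrete measure space: `m > 0` everywhere and `m(X) < ∞`. -/
structure FinMeasure {X : Type*} (m : X → ℝ) : Prop where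
  pos : ∀ x, 0 < m x
  summable : Summable m

/-- The graph `b` over `(X,m)` is canonically compactifiable: every function in
`D(Q)` is bounded. -/
def CanCompact {X : Type*} (b : X → X → ℝ) (m : X → ℝ) : Prop :=
  ∀ u : X → ℝ, MemDQ b m u → ∃ M : ℝ, ∀ x, |u x| ≤ M

/-- `u ∈ D(L)` with `L u = f` for the Neumann Laplacian `L`:
`u ∈ D(Q)`, `f ∈ ℓ²(X,m)` and `Q(u,v) = ⟨f,v⟩` for all `v ∈ D(Q)`. -/
def IsLap {X : Type*} (b : X → X → ℝ) (m : X → ℝ) (u f : X → ℝ) : Prop :=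
  MemDQ b m u ∧ MemL2 m f ∧
    ∀ v : X → ℝ, MemDQ b m v → energyBil b u v = ∑' x, f x * v x * m x

/-- The mean `ū = ⟨u,1⟩ / m(X)`. -/
noncomputable def mean {X : Type*} (m : X → ℝ) (u : X → ℝ) : ℝ :=
  (∑' x, u x * m x) / (∑' x, m x)


/-! Pointwise bounds by the form norm, then by the energy alone for functions vanishing at a base
point, make minimizing sequences for `Q` on `{w ∈ D(Q) : ⟨h e^w, 1⟩ = 0}` pointwise compact, so a
minimizer `u` exists. In the variable `g = e^w` the constraint `⟨h, g⟩ = 0` is linear, so it is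
preserved by the variations `g = e^u (1 + ψ / R)` with `⟨h e^u, ψ⟩ = 0`; letting `R → ∞` yields
`Q(u, ψ) = 0` for all such `ψ`, hence `Q(u, ·) = l ⟨h e^u, ·⟩` for some `l`. Testing with `e^{-u}`
shows that `l > 0` if `h̄ < 0`, and then `u + log l` solves the equation. Conversely, testing a
solution with `1` and `e^{-u}` forces the sign conditions, since `Q(u, e^{-u}) < 0` unless `u` is
constant. -/

open Filter Topology

section RealAnalysis

lemma summable_mul_mul_of_summable_mul_sq {ι : Type*} {c f g : ι → ℝ} (hc : ∀ i, 0 ≤ c i)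
    (hf : Summable fun i => c i * f i ^ 2) (hg : Summable fun i => c i * g i ^ 2) :
    Summable fun i => c i * f i * g i := by
  refine Summable.of_norm_bounded (hf.add hg) fun i => ?_
  rw [Real.norm_eq_abs, mul_assoc, abs_mul, abs_of_nonneg (hc i), ← mul_add]
  refine mul_le_mul_of_nonneg_left (abs_le.2 ⟨?_, ?_⟩) (hc i) <;>
    nlinarith [sq_nonneg (f i + g i), sq_nonneg (f i - g i)]

lemma summable_of_forall_upperBound_le {κ ι : Type*} {F : κ → ι → ℝ} {G : ι → ℝ}
    (hF : ∀ n i, 0 ≤ F n i) (hFs : ∀ n, Summable (F n)) (hFt : Summable fun n => ∑' i, F n i)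
    (hG : ∀ i, 0 ≤ G i) (hGF : ∀ i S, (∀ n, F n i ≤ S) → G i ≤ S) : Summable G := by
  have hprod : Summable fun p : κ × ι => F p.1 p.2 :=
    (summable_prod_of_nonneg fun p => hF p.1 p.2).2 ⟨hFs, hFt⟩
  exact hprod.prod_symm.prod.of_nonneg_of_le hG fun i =>
    hGF i _ fun n => (hprod.prod_symm.prod_factor i).le_tsum n fun k _ => hF k i

lemma abs_iSup_sub_iSup_le {κ : Type*} [Nonempty κ] {f g : κ → ℝ} {δ : ℝ}
    (hf : BddAbove (Set.range f)) (hg : BddAbove (Set.range g)) (h : ∀ n, |f n - g n| ≤ δ) :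
    |(⨆ n, f n) - ⨆ n, g n| ≤ δ := by
  have hfg : (⨆ n, f n) ≤ (⨆ n, g n) + δ := ciSup_le fun n => by
    linarith [le_ciSup hg n, (abs_le.1 (h n)).2]
  have hgf : (⨆ n, g n) ≤ (⨆ n, f n) + δ := ciSup_le fun n => by
    linarith [le_ciSup hf n, (abs_le.1 (h n)).1]
  exact abs_le.2 ⟨by linarith, by linarith⟩

lemma mul_sq_iSup_sub_iSup_le {κ : Type*} [Nonempty κ] {f g : κ → ℝ} {c S : ℝ} (hc : 0 ≤ c)
    (hf : BddAbove (Set.range f)) (hg : BddAbove (Set.range g))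
    (h : ∀ n, c * (f n - g n) ^ 2 ≤ S) : c * ((⨆ n, f n) - ⨆ n, g n) ^ 2 ≤ S := by
  have hS : 0 ≤ S := (mul_nonneg hc (sq_nonneg _)).trans (h (Classical.arbitrary κ))
  rcases hc.eq_or_lt with rfl | hc
  · simpa using hS
  have habs : |(⨆ n, f n) - ⨆ n, g n| ≤ √(S / c) :=
    abs_iSup_sub_iSup_le hf hg fun n => Real.abs_le_sqrt <| (le_div_iff₀' hc).2 (h n)
  rw [← le_div_iff₀' hc, ← sq_abs]
  exact (Real.le_sqrt (abs_nonneg _) (by positivity)).1 habs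

lemma abs_log_sub_log_le {δ s t : ℝ} (hδ : 0 < δ) (hs : δ ≤ s) (ht : δ ≤ t) :
    |Real.log s - Real.log t| ≤ δ⁻¹ * |s - t| := by
  wlog hst : t ≤ s generalizing s t
  · rw [abs_sub_comm, abs_sub_comm s]
    exact this ht hs (le_of_not_ge hst)
  have ht0 : 0 < t := hδ.trans_le ht
  have hs0 : 0 < s := hδ.trans_le hs
  rw [abs_of_nonneg (sub_nonneg.2 (Real.log_le_log ht0 hst)), abs_of_nonneg (sub_nonneg.2 hst)]
  calc Real.log s - Real.log t = Real.log (s / t) := (Real.log_div hs0.ne' ht0.ne').symm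
    _ ≤ s / t - 1 := Real.log_le_sub_one_of_pos (div_pos hs0 ht0)
    _ = t⁻¹ * (s - t) := by field_simp
    _ ≤ δ⁻¹ * (s - t) := by gcongr

lemma abs_exp_sub_exp_le {s t M : ℝ} (hs : s ≤ M) (ht : t ≤ M) :
    |Real.exp s - Real.exp t| ≤ Real.exp M * |s - t| := by
  wlog hst : t ≤ s generalizing s t
  · rw [abs_sub_comm, abs_sub_comm s]
    exact this ht hs (le_of_not_ge hst)
  rw [abs_of_nonneg (sub_nonneg.2 (Real.exp_le_exp.2 hst)), abs_of_nonneg (sub_nonneg.2 hst)]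
  calc Real.exp s - Real.exp t = Real.exp s * (1 - Real.exp (t - s)) := by
        rw [mul_sub, mul_one, ← Real.exp_add, add_sub_cancel]
    _ ≤ Real.exp s * (s - t) :=
        mul_le_mul_of_nonneg_left (by linarith [Real.add_one_le_exp (t - s)]) (Real.exp_pos s).le
    _ ≤ Real.exp M * (s - t) :=
        mul_le_mul_of_nonneg_right (Real.exp_le_exp.2 hs) (sub_nonneg.2 hst)

lemma half_le_one_add_div {R t : ℝ} (hR : 0 < R) (ht : -(R / 2) ≤ t) : 1 / 2 ≤ 1 + t / R := by
  have : -(1 / 2) ≤ t / R := (le_div_iff₀ hR).2 (by linarith)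
  linarith

lemma abs_log_one_add_div_sub_le {R s t : ℝ} (hR : 0 < R) (hs : -(R / 2) ≤ s)
    (ht : -(R / 2) ≤ t) :
    |Real.log (1 + s / R) - Real.log (1 + t / R)| ≤ 2 / R * |s - t| := by
  calc |Real.log (1 + s / R) - Real.log (1 + t / R)|
      ≤ (1 / 2 : ℝ)⁻¹ * |1 + s / R - (1 + t / R)| :=
        abs_log_sub_log_le one_half_pos (half_le_one_add_div hR hs) (half_le_one_add_div hR ht)
    _ = 2 / R * |s - t| := by
        rw [add_sub_add_left_eq_sub, ← sub_div, abs_div, abs_of_pos hR]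
        ring

lemma exists_tendsto_of_forall_abs_le {ι : Type*} (U : Ultrafilter ι) {f : ι → ℝ} {C : ℝ}
    (hf : ∀ i, |f i| ≤ C) : ∃ a, Tendsto f U (𝓝 a) := by
  have hmem : ↑(U.map f) ≤ 𝓟 (Set.Icc (-C) C) :=
    tendsto_principal.2 (Eventually.of_forall fun i => abs_le.1 (hf i))
  obtain ⟨a, -, ha⟩ := isCompact_Icc.ultrafilter_le_nhds _ hmem
  exact ⟨a, ha⟩

lemma exists_pos_of_tsum_mul_eq_zero {ι : Type*} {f w : ι → ℝ} (hw : ∀ i, 0 < w i)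
    (hs : Summable fun i => f i * w i) (h0 : ∑' i, f i * w i = 0) (hf : f ≠ 0) :
    ∃ i, 0 < f i := by
  by_contra! hle
  obtain ⟨i, hi⟩ := Function.ne_iff.1 hf
  have hpos : 0 < ∑' i, -(f i * w i) :=
    hs.neg.tsum_pos (fun j => neg_nonneg.2 (mul_nonpos_of_nonpos_of_nonneg (hle j) (hw j).le)) i
      (neg_pos.2 (mul_neg_of_neg_of_pos (lt_of_le_of_ne (hle i) hi) (hw i)))
  rw [tsum_neg, h0, neg_zero] at hpos
  exact hpos.false

end RealAnalysis

section Graph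

variable {X : Type*} {b : X → X → ℝ} {m : X → ℝ}

section SquareSummable

lemma MemL2.summable_mul {f g : X → ℝ} (hm : ∀ x, 0 ≤ m x) (hf : MemL2 m f) (hg : MemL2 m g) :
    Summable fun x => f x * g x * m x :=
  (summable_mul_mul_of_summable_mul_sq hm (hf.congr fun _ => mul_comm _ _)
    (hg.congr fun _ => mul_comm _ _)).congr fun _ => by ring

lemma MemL2.of_abs_le {f g : X → ℝ} (hm : ∀ x, 0 ≤ m x) (hf : MemL2 m f) (K : ℝ)
    (hgf : ∀ x, |g x| ≤ K * |f x|) : MemL2 m g := by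
  refine Summable.of_nonneg_of_le (fun x => mul_nonneg (sq_nonneg _) (hm x)) (fun x => ?_)
    (Summable.mul_left (K ^ 2) hf)
  rw [← mul_assoc, ← sq_abs (g x), ← sq_abs (f x), ← mul_pow]
  exact mul_le_mul_of_nonneg_right (pow_le_pow_left₀ (abs_nonneg _) (hgf x) 2) (hm x)

lemma MemL2.add {f g : X → ℝ} (hm : ∀ x, 0 ≤ m x) (hf : MemL2 m f) (hg : MemL2 m g) :
    MemL2 m fun x => f x + g x :=
  ((Summable.add hf hg).add ((hf.summable_mul hm hg).mul_left 2)).congr fun _ => by ring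

lemma memL2_single [DecidableEq X] (x₀ : X) (c : ℝ) : MemL2 m (Pi.single x₀ c) :=
  (hasSum_single (f := fun x => (Pi.single x₀ c : X → ℝ) x ^ 2 * m x) x₀ fun x hx => by
    simp [hx]).summable

lemma FinMeasure.nonneg (hm : FinMeasure m) (x : X) : 0 ≤ m x := (hm.pos x).le

lemma FinMeasure.memL2_const (hm : FinMeasure m) (c : ℝ) : MemL2 m fun _ => c :=
  hm.summable.mul_left (c ^ 2)

lemma FinMeasure.mean_neg_iff [Nonempty X] (hm : FinMeasure m) {f : X → ℝ} :
    mean m f < 0 ↔ ∑' x, f x * m x < 0 := by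
  have hmX : 0 < ∑' x, m x :=
    hm.summable.tsum_pos hm.nonneg (Classical.arbitrary X) (hm.pos _)
  rw [mean, div_lt_iff₀ hmX, zero_mul]

end SquareSummable

section Energy

lemma IsGraph.energy_nonneg (hb : IsGraph b) (u : X → ℝ) : 0 ≤ energy b u :=
  mul_nonneg (by norm_num) (tsum_nonneg fun _ => mul_nonneg (hb.nonneg _ _) (sq_nonneg _))

lemma IsGraph.mul_sq_sub_le {u v : X → ℝ} (hb : IsGraph b) {K : ℝ}
    (h : ∀ x y, |v x - v y| ≤ K * |u x - u y|) (x y : X) :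
    b x y * (v x - v y) ^ 2 ≤ K ^ 2 * (b x y * (u x - u y) ^ 2) := by
  rw [mul_left_comm, ← sq_abs (v x - v y), ← sq_abs (u x - u y), ← mul_pow]
  exact mul_le_mul_of_nonneg_left (pow_le_pow_left₀ (abs_nonneg _) (h x y) 2) (hb.nonneg x y)

lemma FinEnergy.of_abs_sub_le {u v : X → ℝ} (hb : IsGraph b) (hu : FinEnergy b u) {K : ℝ}
    (h : ∀ x y, |v x - v y| ≤ K * |u x - u y|) : FinEnergy b v :=
  Summable.of_nonneg_of_le (fun _ => mul_nonneg (hb.nonneg _ _) (sq_nonneg _))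
    (fun p => hb.mul_sq_sub_le h p.1 p.2) (Summable.mul_left (K ^ 2) hu)

lemma FinEnergy.energy_le_of_abs_sub_le {u v : X → ℝ} (hb : IsGraph b) (hu : FinEnergy b u)
    {K : ℝ} (h : ∀ x y, |v x - v y| ≤ K * |u x - u y|) : energy b v ≤ K ^ 2 * energy b u := by
  have hle : ∑' p : X × X, b p.1 p.2 * (v p.1 - v p.2) ^ 2 ≤
      ∑' p : X × X, K ^ 2 * (b p.1 p.2 * (u p.1 - u p.2) ^ 2) :=
    Summable.tsum_le_tsum (fun p => hb.mul_sq_sub_le h p.1 p.2) (hu.of_abs_sub_le hb h)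
      (Summable.mul_left (K ^ 2) hu)
  rw [tsum_mul_left] at hle
  unfold energy
  linarith

lemma FinEnergy.summable_energyBil {u v : X → ℝ} (hb : IsGraph b) (hu : FinEnergy b u)
    (hv : FinEnergy b v) :
    Summable fun p : X × X => b p.1 p.2 * (u p.1 - u p.2) * (v p.1 - v p.2) :=
  summable_mul_mul_of_summable_mul_sq (fun p => hb.nonneg p.1 p.2) hu hv

lemma FinEnergy.add {u v : X → ℝ} (hb : IsGraph b) (hu : FinEnergy b u) (hv : FinEnergy b v) :
    FinEnergy b fun x => u x + v x :=
  ((Summable.add hu hv).add ((hu.summable_energyBil hb hv).mul_left 2)).congr fun _ => by ring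

lemma FinEnergy.energy_add {u v : X → ℝ} (hb : IsGraph b) (hu : FinEnergy b u)
    (hv : FinEnergy b v) :
    energy b (fun x => u x + v x) = energy b u + 2 * energyBil b u v + energy b v := by
  have hsum := ((Summable.hasSum hu).add ((hu.summable_energyBil hb hv).hasSum.mul_left 2)).add
    (Summable.hasSum hv)
  have hexpand := hsum.congr_fun (g := fun p : X × X =>
    b p.1 p.2 * ((u p.1 + v p.1) - (u p.2 + v p.2)) ^ 2) fun _ => by ring
  rw [energy, hexpand.tsum_eq, energy, energyBil, energy]
  ring

lemma energy_const_mul (c : ℝ) (u : X → ℝ) :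
    energy b (fun x => c * u x) = c ^ 2 * energy b u := by
  unfold energy
  rw [mul_left_comm, ← tsum_mul_left (a := c ^ 2)]
  exact congrArg _ (tsum_congr fun _ => by ring)

lemma energy_add_const (c : ℝ) (u : X → ℝ) : energy b (fun x => u x + c) = energy b u := by
  simp only [energy, add_sub_add_right_eq_sub]

lemma energyBil_add_const_left (c : ℝ) (u v : X → ℝ) :
    energyBil b (fun x => u x + c) v = energyBil b u v := by
  simp only [energyBil, add_sub_add_right_eq_sub]

lemma energyBil_const_mul_right (c : ℝ) (u v : X → ℝ) :
    energyBil b u (fun x => c * v x) = c * energyBil b u v := by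
  unfold energyBil
  rw [mul_left_comm, ← tsum_mul_left (a := c)]
  exact congrArg _ (tsum_congr fun _ => by ring)

lemma FinEnergy.energyBil_add_right {u v w : X → ℝ} (hb : IsGraph b) (hu : FinEnergy b u)
    (hv : FinEnergy b v) (hw : FinEnergy b w) :
    energyBil b u (fun x => v x + w x) = energyBil b u v + energyBil b u w := by
  unfold energyBil
  rw [← mul_add, ← (hu.summable_energyBil hb hv).tsum_add (hu.summable_energyBil hb hw)]
  exact congrArg _ (tsum_congr fun _ => by ring)

lemma IsGraph.finEnergy_single [DecidableEq X] (hb : IsGraph b) (x₀ : X) :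
    FinEnergy b (Pi.single x₀ 1) := by
  have hrow : Summable fun p : X × X => if p.1 = x₀ then b p.1 p.2 else 0 := by
    have hinj : Function.Injective fun y : X => (x₀, y) := Prod.mk_right_injective x₀
    rw [← hinj.summable_iff]
    · simpa [Function.comp_def] using hb.row_summable x₀
    · rintro ⟨x, y⟩ hp
      exact if_neg fun hx : x = x₀ => hp ⟨y, by rw [hx]⟩
  have hcol : Summable fun p : X × X => if p.2 = x₀ then b p.1 p.2 else 0 :=
    hrow.prod_symm.congr fun p => by simp only [Prod.fst_swap, Prod.snd_swap, hb.symm p.1 p.2]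
  refine Summable.of_nonneg_of_le (fun p => mul_nonneg (hb.nonneg _ _) (sq_nonneg _))
    (fun p => ?_) (hrow.add hcol)
  by_cases h₁ : p.1 = x₀ <;> by_cases h₂ : p.2 = x₀ <;> simp [h₁, h₂, hb.nonneg]

lemma FinEnergy.mul_sq_sub_le_energy {u : X → ℝ} (hb : IsGraph b) (hu : FinEnergy b u) (x y : X) :
    b x y * (u x - u y) ^ 2 ≤ 2 * energy b u := by
  rw [energy, ← mul_assoc, mul_one_div_cancel two_ne_zero, one_mul]
  exact Summable.le_tsum hu (x, y) fun _ _ => mul_nonneg (hb.nonneg _ _) (sq_nonneg _)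

lemma IsGraph.exists_sq_sub_le_energy {x y : X} (hb : IsGraph b)
    (hxy : Relation.ReflTransGen (fun a c => 0 < b a c) x y) :
    ∃ K, ∀ u, FinEnergy b u → (u y - u x) ^ 2 ≤ K * energy b u := by
  induction hxy with
  | refl => exact ⟨0, fun u _ => by simp⟩
  | @tail y z _ hyz ih =>
    obtain ⟨K, hKu⟩ := ih
    refine ⟨2 * K + 4 / b y z, fun u hu => ?_⟩
    have hedge : (u y - u z) ^ 2 ≤ 2 * energy b u / b y z :=
      (le_div_iff₀' hyz).2 (hu.mul_sq_sub_le_energy hb y z)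
    calc (u z - u x) ^ 2 ≤ 2 * (u y - u x) ^ 2 + 2 * (u y - u z) ^ 2 := by
          linarith [sq_nonneg ((u y - u x) + (u y - u z))]
      _ ≤ 2 * (K * energy b u) + 2 * (2 * energy b u / b y z) := by
          gcongr
          exact hKu u hu
      _ = (2 * K + 4 / b y z) * energy b u := by ring

lemma FinEnergy.of_tendsto {ι : Type*} {l : Filter ι} [l.NeBot] {w : ι → X → ℝ} {u : X → ℝ}
    {E : ℝ} (hb : IsGraph b) (hw : ∀ i, FinEnergy b (w i)) (hwu : ∀ x, Tendsto (w · x) l (𝓝 (u x)))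
    (hE : Tendsto (fun i => energy b (w i)) l (𝓝 E)) : FinEnergy b u ∧ energy b u ≤ E := by
  have hnonneg (v : X → ℝ) (p : X × X) : 0 ≤ b p.1 p.2 * (v p.1 - v p.2) ^ 2 :=
    mul_nonneg (hb.nonneg _ _) (sq_nonneg _)
  have hsum (S : Finset (X × X)) : ∑ p ∈ S, b p.1 p.2 * (u p.1 - u p.2) ^ 2 ≤ 2 * E := by
    refine le_of_tendsto_of_tendsto' (tendsto_finsetSum S fun p _ =>
      (((hwu p.1).sub (hwu p.2)).pow 2).const_mul (b p.1 p.2)) (hE.const_mul 2) fun i => ?_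
    rw [energy, ← mul_assoc, mul_one_div_cancel two_ne_zero, one_mul]
    exact Summable.sum_le_tsum S (fun p _ => hnonneg (w i) p) (hw i)
  refine ⟨summable_of_sum_le (hnonneg u) hsum, ?_⟩
  have := Real.tsum_le_of_sum_le (hnonneg u) hsum
  rw [energy]
  linarith

lemma FinEnergy.tendsto_energyBil {ι : Type*} {l : Filter ι} {w : ι → X → ℝ} {u v : X → ℝ} {K : ℝ}
    (hb : IsGraph b) (hu : FinEnergy b u) (hv : FinEnergy b v)
    (hwv : ∀ x, Tendsto (w · x) l (𝓝 (v x)))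
    (hK : ∀ᶠ i in l, ∀ x y, |w i x - w i y| ≤ K * |v x - v y|) :
    Tendsto (fun i => energyBil b u (w i)) l (𝓝 (energyBil b u v)) := by
  refine (tendsto_tsum_of_dominated_convergence ((hu.summable_energyBil hb hv).abs.mul_left K)
    (fun p => ((hwv p.1).sub (hwv p.2)).const_mul _) (hK.mono fun i hi p => ?_)).const_mul _
  rw [Real.norm_eq_abs, abs_mul, abs_mul _ (v p.1 - v p.2), mul_left_comm K]
  exact mul_le_mul_of_nonneg_left (hi p.1 p.2) (abs_nonneg _)

lemma GraphConnected.exists_edge_ne {u : X → ℝ} (hconn : GraphConnected b)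
    (hu : ∃ x y, u x ≠ u y) : ∃ x y, 0 < b x y ∧ u x ≠ u y := by
  contrapose! hu
  intro x y
  induction hconn x y with
  | refl => rfl
  | tail _ hyz ih => exact ih.trans (hu _ _ hyz)

lemma FinEnergy.energyBil_comp_neg {u : X → ℝ} {f : ℝ → ℝ} (hb : IsGraph b)
    (hconn : GraphConnected b) (hu : FinEnergy b u) (hfu : FinEnergy b fun x => f (u x))
    (hf : StrictAnti f) (hne : ∃ x y, u x ≠ u y) : energyBil b u (fun x => f (u x)) < 0 := by
  obtain ⟨x, y, hxy, huxy⟩ := hconn.exists_edge_ne hne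
  have hanti (s t : ℝ) : (s - t) * (f s - f t) ≤ 0 := by
    rcases le_total s t with hst | hst
    · exact mul_nonpos_of_nonpos_of_nonneg (sub_nonpos.2 hst) (sub_nonneg.2 (hf.antitone hst))
    · exact mul_nonpos_of_nonneg_of_nonpos (sub_nonneg.2 hst) (sub_nonpos.2 (hf.antitone hst))
  have hstrict : (u x - u y) * (f (u x) - f (u y)) < 0 :=
    (hanti _ _).lt_of_ne (mul_ne_zero (sub_ne_zero.2 huxy) (sub_ne_zero.2 (hf.injective.ne huxy)))
  have hpos := (hu.summable_energyBil hb hfu).neg.tsum_pos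
    (fun p => neg_nonneg.2 <| by
      rw [mul_assoc]
      exact mul_nonpos_of_nonneg_of_nonpos (hb.nonneg _ _) (hanti _ _))
    (x, y) (neg_pos.2 <| by
      rw [mul_assoc]
      exact mul_neg_of_pos_of_neg hxy hstrict)
  rw [tsum_neg, neg_pos] at hpos
  exact mul_neg_of_pos_of_neg one_half_pos hpos

end Energy

section FormDomain

lemma FinMeasure.memDQ_const (hm : FinMeasure m) (c : ℝ) : MemDQ b m fun _ => c :=
  ⟨hm.memL2_const c, by simp [FinEnergy, summable_zero]⟩

lemma MemDQ.add {u v : X → ℝ} (hb : IsGraph b) (hm : FinMeasure m) (hu : MemDQ b m u)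
    (hv : MemDQ b m v) : MemDQ b m fun x => u x + v x :=
  ⟨hu.1.add hm.nonneg hv.1, hu.2.add hb hv.2⟩

lemma MemDQ.of_abs_sub_le {u v : X → ℝ} (hb : IsGraph b) (hm : FinMeasure m) (hu : MemDQ b m u)
    {K : ℝ} (h : ∀ x y, |v x - v y| ≤ K * |u x - u y|) : MemDQ b m v := by
  refine ⟨?_, hu.2.of_abs_sub_le hb h⟩
  rcases isEmpty_or_nonempty X with _ | ⟨⟨x₀⟩⟩
  · exact hasSum_empty.summable
  have hdiff : MemL2 m fun x => u x - u x₀ := by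
    simpa only [sub_eq_add_neg] using hu.1.add hm.nonneg (hm.memL2_const (-u x₀))
  simpa using (hdiff.of_abs_le hm.nonneg K fun x => h x x₀).add hm.nonneg (hm.memL2_const (v x₀))

lemma MemDQ.const_mul {u : X → ℝ} (hb : IsGraph b) (hm : FinMeasure m) (hu : MemDQ b m u)
    (c : ℝ) : MemDQ b m fun x => c * u x :=
  hu.of_abs_sub_le hb hm fun x y => by rw [← mul_sub, abs_mul]

lemma MemDQ.add_const {u : X → ℝ} (hb : IsGraph b) (hm : FinMeasure m) (hu : MemDQ b m u)
    (c : ℝ) : MemDQ b m fun x => u x + c :=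
  hu.add hb hm (hm.memDQ_const c)

lemma IsGraph.memDQ_single [DecidableEq X] (hb : IsGraph b) (x₀ : X) :
    MemDQ b m (Pi.single x₀ 1) :=
  ⟨memL2_single x₀ 1, hb.finEnergy_single x₀⟩

lemma IsGraph.formNorm_sq (hb : IsGraph b) (hm : ∀ x, 0 ≤ m x) (u : X → ℝ) :
    formNorm b m u ^ 2 = energy b u + ∑' x, u x ^ 2 * m x :=
  Real.sq_sqrt <| add_nonneg (hb.energy_nonneg u) <|
    tsum_nonneg fun x => mul_nonneg (sq_nonneg _) (hm x)

lemma formNorm_const_mul (c : ℝ) (u : X → ℝ) :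
    formNorm b m (fun x => c * u x) = |c| * formNorm b m u := by
  simp only [formNorm, energy_const_mul, mul_pow, mul_assoc, tsum_mul_left]
  rw [← mul_add, Real.sqrt_mul (sq_nonneg c), Real.sqrt_sq_eq_abs]

lemma IsGraph.tsum_energy_le_formNorm_sq (hb : IsGraph b) (hm : ∀ x, 0 ≤ m x) (u : X → ℝ) :
    ∑' p : X × X, b p.1 p.2 * (u p.1 - u p.2) ^ 2 ≤ 2 * formNorm b m u ^ 2 := by
  have hL2 : 0 ≤ ∑' x, u x ^ 2 * m x := tsum_nonneg fun x => mul_nonneg (sq_nonneg _) (hm x)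
  rw [hb.formNorm_sq hm, energy]
  linarith

lemma IsGraph.tsum_sq_mul_le_formNorm_sq (hb : IsGraph b) (hm : ∀ x, 0 ≤ m x) (u : X → ℝ) :
    ∑' x, u x ^ 2 * m x ≤ formNorm b m u ^ 2 := by
  rw [hb.formNorm_sq hm]
  exact le_add_of_nonneg_left (hb.energy_nonneg u)

lemma MemDQ.iSup {κ : Type*} [Nonempty κ] {g : κ → X → ℝ} (hb : IsGraph b) (hm : FinMeasure m)
    (hg : ∀ n, MemDQ b m (g n)) (hs : Summable fun n => formNorm b m (g n) ^ 2) :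
    (∀ x, BddAbove (Set.range (g · x))) ∧ MemDQ b m fun x => ⨆ n, g n x := by
  have hsq (n : κ) (x : X) : 0 ≤ g n x ^ 2 * m x := mul_nonneg (sq_nonneg _) (hm.nonneg x)
  have henergy (n : κ) (p : X × X) : 0 ≤ b p.1 p.2 * (g n p.1 - g n p.2) ^ 2 :=
    mul_nonneg (hb.nonneg _ _) (sq_nonneg _)
  have hbdd (x : X) : BddAbove (Set.range (g · x)) := by
    refine ⟨√((∑' n, formNorm b m (g n) ^ 2) / m x), ?_⟩
    rintro _ ⟨n, rfl⟩
    refine Real.le_sqrt_of_sq_le ((le_div_iff₀ (hm.pos x)).2 ?_)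
    calc g n x ^ 2 * m x ≤ ∑' y, g n y ^ 2 * m y :=
          Summable.le_tsum (hg n).1 x fun y _ => hsq n y
      _ ≤ formNorm b m (g n) ^ 2 := hb.tsum_sq_mul_le_formNorm_sq hm.nonneg _
      _ ≤ ∑' n, formNorm b m (g n) ^ 2 := hs.le_tsum n fun _ _ => sq_nonneg _
  refine ⟨hbdd, ?_, ?_⟩
  · refine summable_of_forall_upperBound_le hsq (fun n => (hg n).1)
      (hs.of_nonneg_of_le (fun n => tsum_nonneg (hsq n)) fun n =>
        hb.tsum_sq_mul_le_formNorm_sq hm.nonneg _)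
      (fun x => mul_nonneg (sq_nonneg _) (hm.nonneg x)) fun x S hS => ?_
    simpa [mul_comm] using mul_sq_iSup_sub_iSup_le (g := fun _ => 0) (hm.nonneg x) (hbdd x)
      (by simp) (fun n => by simpa [mul_comm] using hS n)
  · exact summable_of_forall_upperBound_le henergy (fun n => (hg n).2)
      ((hs.mul_left 2).of_nonneg_of_le (fun n => tsum_nonneg (henergy n)) fun n =>
        hb.tsum_energy_le_formNorm_sq hm.nonneg _)
      (fun p => mul_nonneg (hb.nonneg _ _) (sq_nonneg _))
      fun p S hS => mul_sq_iSup_sub_iSup_le (hb.nonneg _ _) (hbdd p.1) (hbdd p.2) hS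

/- Gliding hump: otherwise rescaled functions `g n ∈ D(Q)` reach the value `2 ^ n` with form norm at
most `2 ^ (-n)`, and their supremum is an unbounded element of `D(Q)`. -/
lemma CanCompact.exists_abs_le_formNorm (hcc : CanCompact b m) (hb : IsGraph b)
    (hm : FinMeasure m) : ∃ C, ∀ u, MemDQ b m u → ∀ x, |u x| ≤ C * formNorm b m u := by
  by_contra! hcon
  choose u hu x hux using fun n : ℕ => hcon (4 ^ n)
  have hpos (n : ℕ) : 0 < |u n (x n)| :=
    (mul_nonneg (by positivity) (Real.sqrt_nonneg _)).trans_lt (hux n)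
  set g : ℕ → X → ℝ := fun n y => 2 ^ n / u n (x n) * u n y with hg
  have hpeak (n : ℕ) : g n (x n) = 2 ^ n := div_mul_cancel₀ _ (abs_pos.1 (hpos n))
  have hnorm (n : ℕ) : formNorm b m (g n) ^ 2 ≤ (1 / 4) ^ n := by
    have hle : formNorm b m (g n) ≤ (1 / 2) ^ n := by
      rw [hg, formNorm_const_mul, abs_div, abs_of_pos (by positivity), div_mul_eq_mul_div,
        div_le_iff₀ (hpos n)]
      calc 2 ^ n * formNorm b m (u n) = (1 / 2) ^ n * (4 ^ n * formNorm b m (u n)) := by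
            rw [← mul_assoc, ← mul_pow]
            norm_num
        _ ≤ (1 / 2) ^ n * |u n (x n)| := mul_le_mul_of_nonneg_left (hux n).le (by positivity)
    calc formNorm b m (g n) ^ 2 ≤ ((1 / 2) ^ n) ^ 2 := pow_le_pow_left₀ (Real.sqrt_nonneg _) hle 2
      _ = (1 / 4) ^ n := by rw [pow_right_comm]; norm_num
  obtain ⟨hbdd, hsup⟩ := MemDQ.iSup hb hm (fun n => (hu n).const_mul hb hm _)
    (Summable.of_nonneg_of_le (fun n => sq_nonneg _) hnorm
      (summable_geometric_of_lt_one (by norm_num) (by norm_num)))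
  obtain ⟨M, hM⟩ := hcc _ hsup
  obtain ⟨n, hn⟩ := pow_unbounded_of_one_lt M (one_lt_two (α := ℝ))
  exact hn.not_ge <| calc
    (2 : ℝ) ^ n = g n (x n) := (hpeak n).symm
    _ ≤ ⨆ k, g k (x n) := le_ciSup (hbdd (x n)) n
    _ ≤ M := (le_abs_self _).trans (hM (x n))

lemma CanCompact.exists_tsum_sq_mul_le_energy (hcc : CanCompact b m) (hb : IsGraph b)
    (hconn : GraphConnected b) (hm : FinMeasure m) (x₀ : X) :
    ∃ C, ∀ u, MemDQ b m u → u x₀ = 0 → ∑' x, u x ^ 2 * m x ≤ C * energy b u := by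
  obtain ⟨C, hC⟩ := hcc.exists_abs_le_formNorm hb hm
  choose K hKu using fun x => hb.exists_sq_sub_le_energy (hconn x₀ x)
  obtain ⟨F, hF⟩ : ∃ F : Finset X, C ^ 2 * ∑' x : {x // x ∉ F}, m x < 1 / 2 :=
    (((tendsto_tsum_compl_atTop_zero m).const_mul (C ^ 2)).eventually_lt_const
      (by norm_num)).exists
  refine ⟨2 * ∑ x ∈ F, K x * m x + 1, fun u hu hux => ?_⟩
  have hhead : ∑ x ∈ F, u x ^ 2 * m x ≤ (∑ x ∈ F, K x * m x) * energy b u := by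
    rw [Finset.sum_mul]
    refine Finset.sum_le_sum fun x _ => ?_
    rw [mul_right_comm]
    simpa [hux] using mul_le_mul_of_nonneg_right (hKu x u hu.2) (hm.nonneg x)
  have htail : ∑' x : {x // x ∉ F}, u x ^ 2 * m x ≤ 1 / 2 * formNorm b m u ^ 2 := by
    calc ∑' x : {x // x ∉ F}, u x ^ 2 * m x
        ≤ ∑' x : {x // x ∉ F}, C ^ 2 * formNorm b m u ^ 2 * m x := by
          refine Summable.tsum_le_tsum (fun x => ?_) (Summable.subtype hu.1 _)
            ((hm.summable.mul_left _).subtype _)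
          rw [← mul_pow, ← sq_abs (u x)]
          exact mul_le_mul_of_nonneg_right (pow_le_pow_left₀ (abs_nonneg _) (hC u hu x) 2)
            (hm.nonneg x)
      _ = C ^ 2 * (∑' x : {x // x ∉ F}, m x) * formNorm b m u ^ 2 := by
          rw [tsum_mul_left, mul_right_comm]
      _ ≤ 1 / 2 * formNorm b m u ^ 2 := mul_le_mul_of_nonneg_right hF.le (sq_nonneg _)
  have hsplit := Summable.sum_add_tsum_subtype_compl hu.1 F
  rw [hb.formNorm_sq hm.nonneg] at htail
  linarith

lemma CanCompact.exists_sq_le_energy (hcc : CanCompact b m) (hb : IsGraph b)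
    (hconn : GraphConnected b) (hm : FinMeasure m) (x₀ : X) :
    ∃ C, ∀ u, MemDQ b m u → u x₀ = 0 → ∀ x, u x ^ 2 ≤ C * energy b u := by
  obtain ⟨C, hC⟩ := hcc.exists_abs_le_formNorm hb hm
  obtain ⟨D, hD⟩ := hcc.exists_tsum_sq_mul_le_energy hb hconn hm x₀
  refine ⟨C ^ 2 * (1 + D), fun u hu hux x => ?_⟩
  calc u x ^ 2 = |u x| ^ 2 := (sq_abs _).symm
    _ ≤ (C * formNorm b m u) ^ 2 := pow_le_pow_left₀ (abs_nonneg _) (hC u hu x) 2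
    _ = C ^ 2 * (energy b u + ∑' y, u y ^ 2 * m y) := by rw [mul_pow, hb.formNorm_sq hm.nonneg]
    _ ≤ C ^ 2 * (energy b u + D * energy b u) := by
        gcongr
        exact hD u hu hux
    _ = C ^ 2 * (1 + D) * energy b u := by ring

end FormDomain

section ConstraintSet

lemma MemL2.summable_mul_weight {f : X → ℝ} (hm : FinMeasure m) (hf : MemL2 m f) :
    Summable fun x => f x * m x := by
  simpa only [mul_one] using hf.summable_mul hm.nonneg (hm.memL2_const 1)

lemma CanCompact.memL2_mul_exp {f u : X → ℝ} (hcc : CanCompact b m) (hm : FinMeasure m)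
    (hf : MemL2 m f) (hu : MemDQ b m u) : MemL2 m fun x => f x * Real.exp (u x) := by
  obtain ⟨M, hM⟩ := hcc u hu
  refine hf.of_abs_le hm.nonneg (Real.exp M) fun x => ?_
  rw [abs_mul, Real.abs_exp, mul_comm]
  exact mul_le_mul_of_nonneg_right (Real.exp_le_exp.2 (abs_le.1 (hM x)).2) (abs_nonneg _)

lemma CanCompact.memDQ_exp_neg {u : X → ℝ} (hcc : CanCompact b m) (hb : IsGraph b)
    (hm : FinMeasure m) (hu : MemDQ b m u) : MemDQ b m fun x => Real.exp (-u x) := by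
  obtain ⟨M, hM⟩ := hcc u hu
  refine hu.of_abs_sub_le hb hm (K := Real.exp M) fun x y => ?_
  simpa only [neg_sub_neg, abs_sub_comm (u y)] using
    abs_exp_sub_exp_le (neg_le.1 (abs_le.1 (hM x)).1) (neg_le.1 (abs_le.1 (hM y)).1)

lemma MemDQ.log_one_add {ψ : X → ℝ} {δ : ℝ} (hb : IsGraph b) (hm : FinMeasure m)
    (hψ : MemDQ b m ψ) (hδ : 0 < δ) (hδψ : ∀ x, δ ≤ 1 + ψ x) :
    MemDQ b m fun x => Real.log (1 + ψ x) :=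
  hψ.of_abs_sub_le hb hm fun x y => by
    simpa only [add_sub_add_left_eq_sub] using abs_log_sub_log_le hδ (hδψ x) (hδψ y)

/-- The constraint set `{w ∈ D(Q) : ⟨h e^w, 1⟩ = 0}` on which the energy is minimized. Every
solution of `Lw = h e^w` lies in it. -/
def kazdanWarnerConstraint (b : X → X → ℝ) (m h : X → ℝ) : Set (X → ℝ) :=
  {w | MemDQ b m w ∧ ∑' x, h x * Real.exp (w x) * m x = 0}

lemma add_const_mem_kazdanWarnerConstraint {h w : X → ℝ} (hb : IsGraph b) (hm : FinMeasure m)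
    (hw : w ∈ kazdanWarnerConstraint b m h) (c : ℝ) :
    (fun x => w x + c) ∈ kazdanWarnerConstraint b m h := by
  refine ⟨hw.1.add_const hb hm c, ?_⟩
  rw [← mul_zero (Real.exp c), ← hw.2, ← tsum_mul_left]
  exact tsum_congr fun x => by rw [Real.exp_add]; ring

lemma add_log_mem_kazdanWarnerConstraint {h w ψ : X → ℝ} {δ : ℝ} (hb : IsGraph b)
    (hm : FinMeasure m) (hw : MemDQ b m w) (hψ : MemDQ b m ψ) (hδ : 0 < δ)
    (hδψ : ∀ x, δ ≤ 1 + ψ x) (h0 : ∑' x, h x * Real.exp (w x) * (1 + ψ x) * m x = 0) :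
    (fun x => w x + Real.log (1 + ψ x)) ∈ kazdanWarnerConstraint b m h := by
  refine ⟨hw.add hb hm (hψ.log_one_add hb hm hδ hδψ), ?_⟩
  simpa only [Real.exp_add, Real.exp_log (hδ.trans_le (hδψ _)), ← mul_assoc] using h0

lemma exists_ne_of_mem_kazdanWarnerConstraint {h w : X → ℝ}
    (hw : w ∈ kazdanWarnerConstraint b m h) (hne : ∑' x, h x * m x ≠ 0) : ∃ x y, w x ≠ w y := by
  contrapose! hne
  rcases isEmpty_or_nonempty X with _ | ⟨⟨x₀⟩⟩
  · exact tsum_empty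
  rw [← mul_eq_zero_iff_left (Real.exp_ne_zero (w x₀)), ← hw.2, ← tsum_mul_left]
  exact tsum_congr fun x => by rw [hne x x₀]; ring

lemma kazdanWarnerConstraint_nonempty {h : X → ℝ} {x₁ : X} (hb : IsGraph b) (hm : FinMeasure m)
    (hh : MemL2 m h) (hneg : ∑' x, h x * m x < 0) (hx₁ : 0 < h x₁) :
    (kazdanWarnerConstraint b m h).Nonempty := by
  classical
  set c : ℝ := -(∑' x, h x * m x) / (h x₁ * m x₁)
  have hden : 0 < h x₁ * m x₁ := mul_pos hx₁ (hm.pos x₁)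
  have hc : 0 ≤ c := div_nonneg (neg_nonneg.2 hneg.le) hden.le
  have hsingle : HasSum (fun x => h x * (c * (Pi.single x₁ 1 : X → ℝ) x) * m x)
      (-∑' x, h x * m x) := by
    have hterm : h x₁ * (c * (Pi.single x₁ 1 : X → ℝ) x₁) * m x₁ = -∑' x, h x * m x := by
      rw [Pi.single_eq_same, mul_one, mul_right_comm, mul_comm]
      exact div_mul_cancel₀ _ hden.ne'
    rw [← hterm]
    exact hasSum_single x₁ fun x hx => by simp [hx]
  refine ⟨_, add_log_mem_kazdanWarnerConstraint (δ := 1) hb hm (hm.memDQ_const 0)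
    ((hb.memDQ_single x₁).const_mul hb hm c) one_pos (fun x => ?_) ?_⟩
  · have hsingle0 : (0 : X → ℝ) ≤ Pi.single x₁ 1 := Pi.single_nonneg.2 zero_le_one
    exact le_add_of_nonneg_right (mul_nonneg hc (hsingle0 x))
  · have hsum := (hh.summable_mul_weight hm).hasSum.add hsingle
    rw [add_neg_cancel] at hsum
    refine (tsum_congr fun x => ?_).trans hsum.tsum_eq
    rw [Real.exp_zero]
    ring

end ConstraintSet

section Minimizer

lemma tendsto_tsum_mul_exp {ι : Type*} {l : Filter ι} {w : ι → X → ℝ} {h u : X → ℝ} {C : ℝ}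
    (hh : Summable fun x => h x * m x) (hwC : ∀ i x, w i x ≤ C)
    (hwu : ∀ x, Tendsto (w · x) l (𝓝 (u x))) :
    Tendsto (fun i => ∑' x, h x * Real.exp (w i x) * m x) l
      (𝓝 (∑' x, h x * Real.exp (u x) * m x)) := by
  refine tendsto_tsum_of_dominated_convergence (hh.abs.mul_left (Real.exp C))
    (fun x => ((hwu x).rexp.const_mul _).mul_const _) (Eventually.of_forall fun i x => ?_)
  rw [Real.norm_eq_abs, mul_right_comm, abs_mul, Real.abs_exp, mul_comm]
  exact mul_le_mul_of_nonneg_right (Real.exp_le_exp.2 (hwC i x)) (abs_nonneg _)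

lemma exists_minimizing_seq {h : X → ℝ} (hb : IsGraph b) (hm : FinMeasure m)
    (hne : (kazdanWarnerConstraint b m h).Nonempty) (x₀ : X) :
    ∃ w : ℕ → X → ℝ, (∀ n, w n ∈ kazdanWarnerConstraint b m h) ∧ (∀ n, w n x₀ = 0) ∧
      (Antitone fun n => energy b (w n)) ∧
      Tendsto (fun n => energy b (w n)) atTop
        (𝓝 (sInf (energy b '' kazdanWarnerConstraint b m h))) := by
  obtain ⟨r, hanti, hlim, hr⟩ := exists_seq_tendsto_sInf (hne.image (energy b))
    ⟨0, Set.forall_mem_image.2 fun w _ => hb.energy_nonneg w⟩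
  choose v hv hvr using hr
  refine ⟨fun n x => v n x + -v n x₀, fun n => add_const_mem_kazdanWarnerConstraint hb hm (hv n) _,
    fun n => add_neg_cancel _, ?_, ?_⟩ <;>
    simpa only [energy_add_const, hvr]

lemma CanCompact.exists_isMinOn_energy {h : X → ℝ} (hcc : CanCompact b m) (hb : IsGraph b)
    (hconn : GraphConnected b) (hm : FinMeasure m) (hh : MemL2 m h)
    (hne : (kazdanWarnerConstraint b m h).Nonempty) (x₀ : X) :
    ∃ u ∈ kazdanWarnerConstraint b m h, IsMinOn (energy b) (kazdanWarnerConstraint b m h) u := by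
  obtain ⟨w, hw, hwx, hanti, hlim⟩ := exists_minimizing_seq hb hm hne x₀
  obtain ⟨C, hC⟩ := hcc.exists_sq_le_energy hb hconn hm x₀
  have hbound (n : ℕ) (x : X) : |w n x| ≤ √(|C| * energy b (w 0)) := by
    refine Real.abs_le_sqrt ((hC (w n) (hw n).1 (hwx n) x).trans ?_)
    exact mul_le_mul (le_abs_self C) (hanti n.zero_le) (hb.energy_nonneg _) (abs_nonneg C)
  choose u hu using fun x => exists_tendsto_of_forall_abs_le (hyperfilter ℕ) (hbound · x)
  obtain ⟨hufin, huE⟩ := FinEnergy.of_tendsto hb (fun n => (hw n).1.2) hu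
    (hlim.mono_left Nat.hyperfilter_le_atTop)
  have huL2 : MemL2 m u :=
    (hm.memL2_const 1).of_abs_le hm.nonneg (√(|C| * energy b (w 0))) fun x => by
      simpa using le_of_tendsto' (hu x).abs (hbound · x)
  have hu0 := tendsto_tsum_mul_exp (hh.summable_mul_weight hm)
    (fun n x => (abs_le.1 (hbound n x)).2) hu
  simp only [(hw _).2] at hu0
  refine ⟨u, ⟨⟨huL2, hufin⟩, tendsto_nhds_unique hu0 tendsto_const_nhds⟩, fun v hv => ?_⟩
  exact huE.trans (csInf_le ⟨0, Set.forall_mem_image.2 fun w _ => hb.energy_nonneg w⟩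
    (Set.mem_image_of_mem _ hv))

end Minimizer

section EulerLagrange

variable {h u : X → ℝ}

lemma tsum_mul_const_mul (f v : X → ℝ) (c : ℝ) :
    ∑' x, f x * (c * v x) * m x = c * ∑' x, f x * v x * m x := by
  rw [← tsum_mul_left]
  exact tsum_congr fun x => by ring

lemma MemL2.tsum_mul_add {f v w : X → ℝ} (hm : ∀ x, 0 ≤ m x) (hf : MemL2 m f) (hv : MemL2 m v)
    (hw : MemL2 m w) :
    ∑' x, f x * (v x + w x) * m x = ∑' x, f x * v x * m x + ∑' x, f x * w x * m x := by
  rw [← (hf.summable_mul hm hv).tsum_add (hf.summable_mul hm hw)]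
  exact tsum_congr fun x => by ring

lemma energy_le_energy_add_log {ψ : X → ℝ} {R : ℝ} (hcc : CanCompact b m) (hb : IsGraph b)
    (hm : FinMeasure m) (hh : MemL2 m h) (hu : u ∈ kazdanWarnerConstraint b m h)
    (hmin : IsMinOn (energy b) (kazdanWarnerConstraint b m h) u) (hψ : MemDQ b m ψ)
    (h0 : ∑' x, h x * Real.exp (u x) * ψ x * m x = 0) (hR : 0 < R)
    (hRψ : ∀ x, -(R / 2) ≤ ψ x) :
    energy b u ≤ energy b fun x => u x + Real.log (1 + ψ x / R) := by
  have hψR : MemDQ b m fun x => ψ x / R := by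
    simpa only [div_eq_inv_mul] using hψ.const_mul hb hm R⁻¹
  refine hmin (add_log_mem_kazdanWarnerConstraint hb hm hu.1 hψR one_half_pos
    (fun x => half_le_one_add_div hR (hRψ x)) ?_)
  have hψR0 : ∑' x, h x * Real.exp (u x) * (ψ x / R) * m x = 0 := by
    simp only [div_eq_inv_mul, tsum_mul_const_mul, h0, mul_zero]
  rw [(hcc.memL2_mul_exp hm hh hu.1).tsum_mul_add hm.nonneg (hm.memL2_const 1) hψR.1, hψR0,
    add_zero]
  simpa only [mul_one] using hu.2

lemma energyBil_nonneg_of_isMinOn {ψ : X → ℝ} (hcc : CanCompact b m) (hb : IsGraph b)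
    (hm : FinMeasure m) (hh : MemL2 m h) (hu : u ∈ kazdanWarnerConstraint b m h)
    (hmin : IsMinOn (energy b) (kazdanWarnerConstraint b m h) u) (hψ : MemDQ b m ψ)
    (h0 : ∑' x, h x * Real.exp (u x) * ψ x * m x = 0) : 0 ≤ energyBil b u ψ := by
  obtain ⟨M, hM⟩ := hcc ψ hψ
  have hlarge : ∀ᶠ R : ℝ in atTop, 0 < R ∧ ∀ x, -(R / 2) ≤ ψ x := by
    filter_upwards [eventually_gt_atTop 0, eventually_ge_atTop (2 * M)] with R hR hRM
    exact ⟨hR, fun x => by linarith [(abs_le.1 (hM x)).1]⟩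
  have hlip : ∀ᶠ R : ℝ in atTop, ∀ x y,
      |R * Real.log (1 + ψ x / R) - R * Real.log (1 + ψ y / R)| ≤ 2 * |ψ x - ψ y| := by
    filter_upwards [hlarge] with R ⟨hR, hRψ⟩ x y
    rw [← mul_sub, abs_mul, abs_of_pos hR, ← le_div_iff₀' hR, mul_div_right_comm]
    exact abs_log_one_add_div_sub_le hR (hRψ x) (hRψ y)
  have hQ : Tendsto (fun R : ℝ => energyBil b u fun x => R * Real.log (1 + ψ x / R)) atTop
      (𝓝 (energyBil b u ψ)) :=
    hu.1.2.tendsto_energyBil hb hψ.2 (fun x => Real.tendsto_mul_log_one_add_div_atTop (ψ x)) hlip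
  have hlim : Tendsto (fun R : ℝ => 2 * (energyBil b u fun x => R * Real.log (1 + ψ x / R)) +
      R⁻¹ * (4 * energy b ψ)) atTop (𝓝 (2 * energyBil b u ψ)) := by
    simpa using (hQ.const_mul 2).add (tendsto_inv_atTop_zero.mul_const (4 * energy b ψ))
  suffices 0 ≤ 2 * energyBil b u ψ by linarith
  refine ge_of_tendsto hlim ?_
  filter_upwards [hlarge] with R ⟨hR, hRψ⟩
  have hlog (x y : X) := abs_log_one_add_div_sub_le hR (hRψ x) (hRψ y)
  have hvar := energy_le_energy_add_log hcc hb hm hh hu hmin hψ h0 hR hRψ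
  rw [hu.1.2.energy_add hb (hψ.2.of_abs_sub_le hb hlog)] at hvar
  have hE := hψ.2.energy_le_of_abs_sub_le hb hlog
  rw [energyBil_const_mul_right]
  have hexp : 0 ≤ R * (2 * (energyBil b u fun x => Real.log (1 + ψ x / R)) +
      (2 / R) ^ 2 * energy b ψ) := mul_nonneg hR.le (by linarith)
  calc 0 ≤ _ := hexp
    _ = _ := by field_simp; ring

lemma exists_energyBil_eq_mul {f : X → ℝ} (hb : IsGraph b) (hm : FinMeasure m)
    (hu : FinEnergy b u) (hf : MemL2 m f)
    (hker : ∀ ψ, MemDQ b m ψ → ∑' x, f x * ψ x * m x = 0 → energyBil b u ψ = 0) :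
    ∃ l, ∀ v, MemDQ b m v → energyBil b u v = l * ∑' x, f x * v x * m x := by
  by_cases hw : ∃ w, MemDQ b m w ∧ ∑' x, f x * w x * m x ≠ 0
  · obtain ⟨w, hw, hfw⟩ := hw
    refine ⟨energyBil b u w / ∑' x, f x * w x * m x, fun v hv => ?_⟩
    set c := -((∑' x, f x * v x * m x) / ∑' x, f x * w x * m x) with hc
    have hcw := hw.const_mul hb hm c
    have hψ := hker _ (hv.add hb hm hcw) <| by
      rw [hf.tsum_mul_add hm.nonneg hv.1 hcw.1, tsum_mul_const_mul, hc]
      field_simp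
      ring
    rw [hu.energyBil_add_right hb hv.2 hcw.2, energyBil_const_mul_right] at hψ
    rw [eq_neg_of_add_eq_zero_left hψ, hc]
    ring
  · push Not at hw
    exact ⟨0, fun v hv => by rw [zero_mul, hker v hv (hw v hv)]⟩

lemma exists_lagrange_multiplier (hcc : CanCompact b m) (hb : IsGraph b) (hm : FinMeasure m)
    (hh : MemL2 m h) (hu : u ∈ kazdanWarnerConstraint b m h)
    (hmin : IsMinOn (energy b) (kazdanWarnerConstraint b m h) u) :
    ∃ l, ∀ v, MemDQ b m v → energyBil b u v = l * ∑' x, h x * Real.exp (u x) * v x * m x := by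
  refine exists_energyBil_eq_mul hb hm hu.1.2 (hcc.memL2_mul_exp hm hh hu.1) fun ψ hψ h0 => ?_
  have hneg := energyBil_nonneg_of_isMinOn hcc hb hm hh hu hmin (hψ.const_mul hb hm (-1))
    (by rw [tsum_mul_const_mul, h0, mul_zero])
  rw [energyBil_const_mul_right] at hneg
  linarith [energyBil_nonneg_of_isMinOn hcc hb hm hh hu hmin hψ h0]

end EulerLagrange

section KazdanWarner

variable {h u : X → ℝ}

lemma IsLap.tsum_eq_zero {f : X → ℝ} (hm : FinMeasure m) (hu : IsLap b m u f) :
    ∑' x, f x * m x = 0 := by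
  simpa [energyBil] using (hu.2.2 _ (hm.memDQ_const 1)).symm

lemma IsLap.eq_zero_of_forall_eq {f : X → ℝ} (hb : IsGraph b) (hm : FinMeasure m)
    (hu : IsLap b m u f) (hconst : ∀ x y, u x = u y) : f = 0 := by
  classical
  funext x
  have htest := hu.2.2 _ (hb.memDQ_single x)
  rw [tsum_eq_single x fun y hy => by simp [hy]] at htest
  simpa [energyBil, hconst _ x, (hm.pos x).ne'] using htest.symm

lemma CanCompact.energyBil_exp_neg_neg (hcc : CanCompact b m) (hb : IsGraph b)
    (hconn : GraphConnected b) (hm : FinMeasure m) (hu : MemDQ b m u) (hne : ∃ x y, u x ≠ u y) :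
    energyBil b u (fun x => Real.exp (-u x)) < 0 :=
  hu.2.energyBil_comp_neg (f := fun t => Real.exp (-t)) hb hconn (hcc.memDQ_exp_neg hb hm hu).2
    (fun _ _ hst => Real.exp_lt_exp.2 (neg_lt_neg hst)) hne

lemma tsum_mul_exp_mul_exp_neg (h u : X → ℝ) :
    ∑' x, h x * Real.exp (u x) * Real.exp (-u x) * m x = ∑' x, h x * m x :=
  tsum_congr fun x => by rw [Real.exp_neg, mul_inv_cancel_right₀ (Real.exp_ne_zero _)]

lemma IsLap.tsum_mul_neg (hcc : CanCompact b m) (hb : IsGraph b) (hconn : GraphConnected b)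
    (hm : FinMeasure m) (hne : h ≠ 0) (hu : IsLap b m u fun x => h x * Real.exp (u x)) :
    ∑' x, h x * m x < 0 := by
  rw [← tsum_mul_exp_mul_exp_neg h u, ← hu.2.2 _ (hcc.memDQ_exp_neg hb hm hu.1)]
  refine hcc.energyBil_exp_neg_neg hb hconn hm hu.1 ?_
  contrapose! hne
  funext x
  simpa using congrFun (hu.eq_zero_of_forall_eq hb hm hne) x

lemma IsLap.exists_pos_and_exists_neg (hm : FinMeasure m) (hne : h ≠ 0)
    (hu : IsLap b m u fun x => h x * Real.exp (u x)) : (∃ x, 0 < h x) ∧ ∃ x, h x < 0 := by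
  have hw (x : X) : 0 < Real.exp (u x) * m x := mul_pos (Real.exp_pos _) (hm.pos x)
  have hsum := hu.2.1.summable_mul_weight hm
  have h0 := hu.tsum_eq_zero hm
  simp only [mul_assoc] at hsum h0
  refine ⟨exists_pos_of_tsum_mul_eq_zero hw hsum h0 hne, ?_⟩
  obtain ⟨x, hx⟩ := exists_pos_of_tsum_mul_eq_zero (f := -h) hw (by simpa using hsum.neg)
    (by simpa [tsum_neg] using h0) (neg_ne_zero.2 hne)
  exact ⟨x, neg_pos.1 hx⟩

lemma lagrange_multiplier_pos {l : ℝ} (hcc : CanCompact b m) (hb : IsGraph b)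
    (hconn : GraphConnected b) (hm : FinMeasure m) (hneg : ∑' x, h x * m x < 0)
    (hu : u ∈ kazdanWarnerConstraint b m h)
    (hl : ∀ v, MemDQ b m v → energyBil b u v = l * ∑' x, h x * Real.exp (u x) * v x * m x) :
    0 < l := by
  have hQ := hcc.energyBil_exp_neg_neg hb hconn hm hu.1
    (exists_ne_of_mem_kazdanWarnerConstraint hu hneg.ne)
  rw [hl _ (hcc.memDQ_exp_neg hb hm hu.1), tsum_mul_exp_mul_exp_neg] at hQ
  exact pos_of_mul_neg_left hQ hneg.le

lemma isLap_add_log {l : ℝ} (hcc : CanCompact b m) (hb : IsGraph b) (hm : FinMeasure m)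
    (hh : MemL2 m h) (hu : MemDQ b m u) (hpos : 0 < l)
    (hl : ∀ v, MemDQ b m v → energyBil b u v = l * ∑' x, h x * Real.exp (u x) * v x * m x) :
    IsLap b m (fun x => u x + Real.log l) fun x => h x * Real.exp (u x + Real.log l) := by
  have hul := hu.add_const hb hm (Real.log l)
  refine ⟨hul, hcc.memL2_mul_exp hm hh hul, fun v hv => ?_⟩
  rw [energyBil_add_const_left, hl v hv, ← tsum_mul_left]
  exact tsum_congr fun x => by simp only [Real.exp_add, Real.exp_log hpos]; ring

lemma CanCompact.exists_isLap (hcc : CanCompact b m) (hb : IsGraph b) (hconn : GraphConnected b)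
    (hm : FinMeasure m) (hh : MemL2 m h) (hneg : ∑' x, h x * m x < 0) (hpos : ∃ x, 0 < h x) :
    ∃ u, IsLap b m u fun x => h x * Real.exp (u x) := by
  obtain ⟨x₁, hx₁⟩ := hpos
  obtain ⟨u, hu, hmin⟩ := hcc.exists_isMinOn_energy hb hconn hm hh
    (kazdanWarnerConstraint_nonempty hb hm hh hneg hx₁) x₁
  obtain ⟨l, hl⟩ := exists_lagrange_multiplier hcc hb hm hh hu hmin
  have hlpos := lagrange_multiplier_pos hcc hb hconn hm hneg hu hl
  exact ⟨_, isLap_add_log hcc hb hm hh hu.1 hlpos hl⟩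

end KazdanWarner

end Graph

/-- the Kazdan-Warner equation `Lu = h e^u` has a solution iff
`h̄ < 0` and `h` changes sign. -/
theorem stmt6 {X : Type*} [Countable X] (b : X → X → ℝ) (m : X → ℝ)
    (hb : IsGraph b) (hconn : GraphConnected b) (hm : FinMeasure m)
    (hcc : CanCompact b m) (h : X → ℝ) (hh2 : MemL2 m h) (hne : h ≠ 0) :
    (∃ u : X → ℝ, IsLap b m u (fun x => h x * Real.exp (u x))) ↔
      (mean m h < 0 ∧ (∃ x, 0 < h x) ∧ (∃ x, h x < 0)) := by
  obtain ⟨x₀, -⟩ := Function.ne_iff.1 hne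
  have : Nonempty X := ⟨x₀⟩
  rw [hm.mean_neg_iff]
  constructor
  · rintro ⟨u, hu⟩
    exact ⟨hu.tsum_mul_neg hcc hb hconn hm hne, hu.exists_pos_and_exists_neg hm hne⟩
  · rintro ⟨hneg, hpos, -⟩
    exact hcc.exists_isLap hb hconn hm hh2 hneg hpos
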